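/- For every integer n ≥ 5, the alternating group A_n satisfies m(A_n) ≤ 52 · ω(n!/2)², where n!/2 = |A_n| is the order of A_n. -/

import Mathlib

/-!
A minimal generating set of a finite group `G` is irredundant: adjoining its elements one at a time
gives a strictly increasing chain of subgroups. By Lagrange the order at least doubles at each
step, so a minimal generating set of `G` has at most `log₂ |G|` elements
(`IsMinimalGeneratingSet.two_pow_card_le`). For `G = A_n` and `2 ^ k ≤ n < 2 ^ (k + 1)` this gives
at most `2 ^ (k + 1) * (k + 1)` elements, since `n! ≤ n ^ n`.

On the other side, every prime `p ≤ n` divides `n! / 2` as soon as `n ≥ 4`, so the number of prime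
divisors of `|A_n|` is at least `π(2 ^ k)`. Chebyshev's lower bound for `π` gives
`2 ^ k ≤ k * π(2 ^ k) + k + 1` (`two_pow_le_mul_primeCounting`). The square of the resulting bound
for `π(2 ^ k)` grows like `4 ^ k / k ^ 2`, and the constant `52` is large enough for every `k ≥ 2`.
-/

/-- A finset `S` is a *minimal generating set* of the group `G` if it generates `G`
and no proper subset of it generates `G`. -/
def IsMinimalGeneratingSet {G : Type*} [Group G] (S : Finset G) : Prop :=
  Subgroup.closure (S : Set G) = ⊤ ∧ ∀ T ⊂ S, Subgroup.closure (T : Set G) ≠ ⊤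

/-- An irredundant finite set `T`, i.e. one in which no element lies in the subgroup generated by
the others, generates a subgroup of order at least `2 ^ |T|`: each new element at least doubles
the order by Lagrange's theorem. -/
theorem two_pow_card_le_card_closure {G : Type*} [Group G] [Finite G] [DecidableEq G]
    (T : Finset G) (hT : ∀ x ∈ T, x ∉ Subgroup.closure ((T.erase x : Finset G) : Set G)) :
    2 ^ T.card ≤ Nat.card (Subgroup.closure (T : Set G)) := by
  induction T using Finset.induction_on with
  | empty => simp
  | insert a T ha ih =>
    have hT' : ∀ x ∈ T, x ∉ Subgroup.closure ((T.erase x : Finset G) : Set G) := by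
      intro x hx hmem
      refine hT x (Finset.mem_insert_of_mem hx) (Subgroup.closure_mono ?_ hmem)
      exact_mod_cast Finset.erase_subset_erase x (Finset.subset_insert a T)
    have haT : a ∉ Subgroup.closure (T : Set G) := by
      have h := hT a (Finset.mem_insert_self a T)
      rwa [Finset.erase_insert ha] at h
    have hle : Subgroup.closure (T : Set G) ≤
        Subgroup.closure ((insert a T : Finset G) : Set G) :=
      Subgroup.closure_mono (by exact_mod_cast Finset.subset_insert a T)
    have hne : Nat.card (Subgroup.closure (T : Set G)) ≠
        Nat.card (Subgroup.closure ((insert a T : Finset G) : Set G)) := by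
      intro h
      rw [Subgroup.eq_of_le_of_card_ge hle h.ge] at haT
      exact haT (Subgroup.subset_closure (by simp))
    obtain ⟨c, hc⟩ := Subgroup.card_dvd_of_le hle
    have hpos : 0 < Nat.card (Subgroup.closure ((insert a T : Finset G) : Set G)) :=
      Nat.card_pos
    have hc2 : 2 ≤ c := by
      by_contra! hlt
      interval_cases c <;> omega
    rw [Finset.card_insert_of_notMem ha, pow_succ, hc]
    exact Nat.mul_le_mul (ih hT') hc2

theorem IsMinimalGeneratingSet.two_pow_card_le {G : Type*} [Group G] [Finite G] {S : Finset G}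
    (hS : IsMinimalGeneratingSet S) : 2 ^ S.card ≤ Nat.card G := by
  classical
  have h := two_pow_card_le_card_closure S fun x hx hmem => by
    refine hS.2 _ (Finset.erase_ssubset hx) (top_le_iff.mp ?_)
    rw [← hS.1, Subgroup.closure_le]
    intro y hy
    by_cases hyx : y = x
    · exact hyx ▸ hmem
    · exact Subgroup.subset_closure (by simpa [hyx] using hy)
  rwa [hS.1, Subgroup.card_top] at h

/-- Chebyshev's lower bound for `π` at a power of two, cleared of logarithms. -/
theorem two_pow_le_mul_primeCounting (k : ℕ) (hk : 1 ≤ k) :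
    2 ^ k ≤ k * Nat.primeCounting (2 ^ k) + (k + 1) := by
  have h := Chebyshev.pi_ge (2 ^ k)
  have hL : 0 < Real.log 2 := Real.log_pos one_lt_two
  have hk' : (0 : ℝ) < k := by exact_mod_cast hk
  have hlog : Real.log ((2 : ℝ) ^ k + 1) ≤ (k + 1) * Real.log 2 := by
    have h1 : (2 : ℝ) ^ k + 1 ≤ 2 ^ (k + 1) := by
      have : (1 : ℝ) ≤ 2 ^ k := one_le_pow₀ one_le_two
      rw [pow_succ]; linarith
    calc Real.log ((2 : ℝ) ^ k + 1) ≤ Real.log (2 ^ (k + 1)) :=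
          Real.log_le_log (by positivity) h1
      _ = (k + 1) * Real.log 2 := by rw [Real.log_pow]; push_cast; ring
  push_cast at h
  rw [Real.log_pow, div_le_iff₀ (by positivity)] at h
  have h2 : (2 : ℝ) ^ k * Real.log 2 ≤
      (k * Nat.primeCounting (2 ^ k) + (k + 1)) * Real.log 2 := by linarith
  exact_mod_cast le_of_mul_le_mul_right h2 hL

theorem primeCounting_le_card_primeFactors (n : ℕ) (hn : 4 ≤ n) :
    Nat.primeCounting n ≤ (n.factorial / 2).primeFactors.card := by
  have h4 : 4 ∣ n.factorial := Nat.dvd_factorial (by norm_num) hn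
  have hpos := n.factorial_pos
  rw [← Nat.primesLE_card_eq_primeCounting]
  refine Finset.card_le_card fun p hp => ?_
  obtain ⟨hpn, hpp⟩ := Nat.mem_primesLE.mp hp
  refine Nat.mem_primeFactors.mpr ⟨hpp, ?_, by omega⟩
  by_cases h2 : p = 2
  · subst h2
    omega
  · have hd : p ∣ 2 * (n.factorial / 2) := by
      rw [Nat.mul_div_cancel' (by omega)]
      exact Nat.dvd_factorial hpp.pos hpn
    exact (Nat.Coprime.dvd_mul_left
      ((Nat.coprime_primes hpp Nat.prime_two).mpr h2)).mp hd

theorem sq_mul_succ_le_two_pow (k : ℕ) (hk : 2 ≤ k) : k ^ 2 * (k + 1) ≤ 8 * 2 ^ k := by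
  -- The ratio of consecutive left-hand sides is at most `2` only from `k = 4` on.
  rcases Nat.lt_or_ge k 4 with h | h
  · interval_cases k <;> norm_num
  · induction k, h using Nat.le_induction with
    | base => norm_num
    | succ k h ih =>
      have := ih (by omega)
      rw [pow_succ 2 k]
      nlinarith [mul_le_mul h h (by omega) (by omega), mul_le_mul_right h (k ^ 2)]

/-- The numerical comparison behind the constant `52`, with `P` standing for `π(2 ^ k)`. -/
theorem two_pow_mul_le_of_two_pow_le (k P : ℕ) (hk : 2 ≤ k) (hP : 2 ≤ P)
    (h : 2 ^ k ≤ k * P + (k + 1)) : 2 ^ (k + 1) * (k + 1) ≤ 52 * P ^ 2 := by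
  -- As `k ≥ 2` and `P ≥ 2`, the error term `k + 1` is at most `3 / 4 * (k * P)`.
  have h1 : 4 * 2 ^ k ≤ 7 * (k * P) := by nlinarith [Nat.mul_le_mul_left k hP]
  have h2 : (4 * 2 ^ k) ^ 2 ≤ (7 * (k * P)) ^ 2 := Nat.pow_le_pow_left h1 2
  have h3 := Nat.mul_le_mul_left (2 ^ k) (sq_mul_succ_le_two_pow k hk)
  refine le_of_mul_le_mul_left (a := 49 * k ^ 2) ?_ (by positivity)
  rw [pow_succ 2 k]
  nlinarith

/-- **Theorem 3.5 for `G = A_n`.** For every `n ≥ 5`, every minimal generating set of the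
alternating group `A_n` has size at most `52 · ω(n!/2)²`, where `n!/2 = |A_n|`. -/
theorem max_minimal_generating_set_alternatingGroup_le
    (n : ℕ) (hn : 5 ≤ n)
    (S : Finset ↥(alternatingGroup (Fin n))) (hS : IsMinimalGeneratingSet S) :
    S.card ≤ 52 * (n.factorial / 2).primeFactors.card ^ 2 := by
  have : Nontrivial (Fin n) := Fin.nontrivial_iff_two_le.mpr (by omega)
  have hcard := hS.two_pow_card_le
  rw [nat_card_alternatingGroup, Nat.card_fin] at hcard
  set k := Nat.log 2 n with hk
  have hkn : 2 ^ k ≤ n := Nat.pow_log_le_self 2 (by omega)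
  have hnk : n < 2 ^ (k + 1) := Nat.lt_pow_succ_log_self one_lt_two n
  have hk2 : 2 ≤ k := (Nat.le_log_iff_pow_le one_lt_two (by omega)).mpr (by omega)
  have hS_le : S.card ≤ 2 ^ (k + 1) * (k + 1) := by
    have h1 : 2 ^ S.card ≤ 2 ^ ((k + 1) * n) :=
      calc 2 ^ S.card ≤ n.factorial := hcard.trans (Nat.div_le_self _ _)
        _ ≤ n ^ n := Nat.factorial_le_pow n
        _ ≤ (2 ^ (k + 1)) ^ n := Nat.pow_le_pow_left hnk.le n
        _ = 2 ^ ((k + 1) * n) := (pow_mul _ _ _).symm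
    have h2 := (Nat.pow_le_pow_iff_right one_lt_two).mp h1
    nlinarith
  have hP2 : 2 ≤ Nat.primeCounting (2 ^ k) :=
    calc 2 = Nat.primeCounting 4 := by decide
      _ ≤ Nat.primeCounting (2 ^ k) :=
        Nat.monotone_primeCounting (Nat.pow_le_pow_right (n := 2) (by norm_num) hk2)
  calc S.card ≤ 2 ^ (k + 1) * (k + 1) := hS_le
    _ ≤ 52 * Nat.primeCounting (2 ^ k) ^ 2 :=
      two_pow_mul_le_of_two_pow_le k _ hk2 hP2 (two_pow_le_mul_primeCounting k (by omega))
    _ ≤ 52 * (n.factorial / 2).primeFactors.card ^ 2 := by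
      gcongr
      exact (Nat.monotone_primeCounting hkn).trans
        (primeCounting_le_card_primeFactors n (by omega))
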